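/- There exist first-order formulas φ_samecol(x,y), φ_samerow(x,y), φ_q(x,y), φ_rc(x,y) over the language with two binary relation symbols for < and ◁ such that for every n ∈ ℕ and all a,b ∈ {0,...,n}, the finite prefix structure ({0,...,n}, <, ◁) satisfies: φ_samecol(a,b) iff c(a) = c(b); φ_samerow(a,b) iff r(a) = r(b); φ_q(a,b) iff q(a) = b; and φ_rc(a,b) iff r(a) = c(b). -/

import Mathlib

open FirstOrder Language

/-- `q_i = i(i+1)/2`, the smallest element of column `i`. -/
def qseq (i : ℕ) : ℕ := i * (i + 1) / 2

/-- `c(x)`, the column number of `x`: the largest `i` with `q_i ≤ x`. -/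
def col (x : ℕ) : ℕ := Nat.findGreatest (fun i => qseq i ≤ x) x

/-- `q(x) = q_{c(x)}`, the bottom-most element of the column of `x`. -/
def qf (x : ℕ) : ℕ := qseq (col x)

/-- `r(x) = x - q(x)`, the row number of `x`. -/
def rowf (x : ℕ) : ℕ := x - qf x

/-- The row-major linear order `◁`. -/
def ordc (x y : ℕ) : Prop := rowf x < rowf y ∨ (rowf x = rowf y ∧ col x < col y)

/-- Relation symbols of the language with the two binary relations `<` and `◁`. -/
inductive Rel2 : ℕ → Type
  | lt : Rel2 2
  | ordc : Rel2 2

/-- The language with two binary relation symbols, for `<` and `◁`. -/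
def Lord2 : Language := ⟨fun _ => Empty, Rel2⟩

/-- The finite prefix structure `({0,...,n}, <, ◁)`. -/
def struct2 (n : ℕ) : Lord2.Structure (Fin (n + 1)) where
  funMap := fun f _ => f.elim
  RelMap := fun r v =>
    match r with
    | .lt => (v 0 : ℕ) < (v 1 : ℕ)
    | .ordc => ordc (v 0 : ℕ) (v 1 : ℕ)

/-!
In the grid coordinates `(c(x), r(x))` the natural numbers are the points on or below the diagonal,
`<` is the column-major lexicographic order and `◁` the row-major one. Stepping up by one from `p`
to `y` moves to a larger element of `◁` inside a column, whereas a jump to the bottom of a new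
column moves to a smaller one as soon as `0 < p`; this defines the bottom row. Two elements share
a column iff no bottom element separates them. For `c(a) ≤ c(b)`, the elements `z` of the column of
`b` with `z ◁ a` are those with `r(z) < r(a)`, so `a` and `b` share a row iff these are exactly the
`z < b`. The diagonal consists of the leftmost point of each row, and `r(a) = c(b)` says that the
diagonal point of the row of `a` lies in the column of `b`. All witnesses needed are at most
`max a b`, so nothing changes on passing to a finite prefix.
-/

theorem qseq_succ (i : ℕ) : qseq (i + 1) = qseq i + (i + 1) := by
  simpa only [qseq, Nat.add_sub_cancel, mul_comm] using Nat.triangle_succ (i + 1)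

theorem qseq_strictMono : StrictMono qseq :=
  strictMono_nat_of_lt_succ fun i => by rw [qseq_succ]; omega

theorem gc_qseq_col : GaloisConnection qseq col := fun i x => by
  constructor
  · intro h
    exact Nat.le_findGreatest ((qseq_strictMono.le_apply).trans h) h
  · intro h
    have hcol : qseq (col x) ≤ x :=
      Nat.findGreatest_spec (P := fun i => qseq i ≤ x) (Nat.zero_le x) (Nat.zero_le x)
    exact (qseq_strictMono.monotone h).trans hcol

theorem qf_add_rowf (x : ℕ) : qf x + rowf x = x :=
  Nat.add_sub_cancel' (gc_qseq_col.l_u_le x)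

theorem rowf_le_col (x : ℕ) : rowf x ≤ col x := by
  have hlt : x < qseq (col x + 1) := gc_qseq_col.lt_iff_lt.2 (Nat.lt_succ_self _)
  have hx : qseq (col x) + rowf x = x := qf_add_rowf x
  rw [qseq_succ] at hlt
  omega

theorem col_qseq_add {i j : ℕ} (h : j ≤ i) : col (qseq i + j) = i := by
  apply le_antisymm
  · refine Nat.lt_succ_iff.1 (gc_qseq_col.lt_iff_lt.1 ?_)
    rw [Nat.succ_eq_add_one, qseq_succ]
    omega
  · exact gc_qseq_col.le_u (Nat.le_add_right _ _)

theorem rowf_qseq_add {i j : ℕ} (h : j ≤ i) : rowf (qseq i + j) = j := by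
  rw [rowf, qf, col_qseq_add h, Nat.add_sub_cancel_left]

theorem lt_iff_col_lt_or_rowf_lt {x y : ℕ} :
    x < y ↔ col x < col y ∨ col x = col y ∧ rowf x < rowf y := by
  have hx := qf_add_rowf x
  have hy := qf_add_rowf y
  rcases lt_trichotomy (col x) (col y) with h | h | h
  · simp only [h, gc_qseq_col.monotone_u.reflect_lt h, true_or]
  · have hq : qf x = qf y := congrArg qseq h
    omega
  · have := gc_qseq_col.monotone_u.reflect_lt h
    omega

theorem exists_le_col_eq_rowf_eq {n : ℕ} (x : Fin n) {i j : ℕ} (hji : j ≤ i) (hi : i ≤ col x)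
    (hj : j ≤ rowf x) : ∃ z : Fin n, z ≤ x ∧ col z = i ∧ rowf z = j := by
  have hle : qseq i + j ≤ x :=
    (add_le_add (qseq_strictMono.monotone hi) hj).trans_eq (qf_add_rowf x)
  exact ⟨⟨qseq i + j, hle.trans_lt x.isLt⟩, hle, col_qseq_add hji, rowf_qseq_add hji⟩

theorem rowf_pos_of_rowf_succ_eq_zero {p : ℕ} (hp : 0 < p) (h : rowf (p + 1) = 0) :
    0 < rowf p := by
  by_contra! hrow
  have hcol : 1 ≤ col p := gc_qseq_col.le_u (show qseq 1 ≤ p from hp)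
  have hq : qseq (col p) + 1 = p + 1 := by
    have : qseq (col p) + rowf p = p := qf_add_rowf p
    omega
  have hone : rowf (p + 1) = 1 := hq ▸ rowf_qseq_add hcol
  omega

theorem rowf_eq_zero_iff_forall_covBy {n : ℕ} (y : Fin n) :
    rowf y = 0 ↔ ∀ p : Fin n, p ⋖ y → (∃ z, z < p) → ordc y p := by
  constructor
  · rintro hy p hpy ⟨z, hz⟩
    have hsucc : (p : ℕ) + 1 = y := Nat.covBy_iff_add_one_eq.1 (Fin.covBy_iff.1 hpy)
    have hp : 0 < (p : ℕ) := (Nat.zero_le z).trans_lt hz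
    have hrow : 0 < rowf p := rowf_pos_of_rowf_succ_eq_zero hp (hsucc ▸ hy)
    exact Or.inl (hy ▸ hrow)
  · intro h
    by_contra hy
    have hrow_le := rowf_le_col y
    obtain ⟨p, -, hpc, hpr⟩ :=
      exists_le_col_eq_rowf_eq y (j := rowf y - 1) (by omega) le_rfl (by omega)
    obtain ⟨z, -, hzc, -⟩ :=
      exists_le_col_eq_rowf_eq y (i := 0) (j := 0) le_rfl (Nat.zero_le _) (Nat.zero_le _)
    have hsucc : (p : ℕ) + 1 = y := by
      have hq : qf p = qf y := congrArg qseq hpc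
      have := qf_add_rowf p
      have := qf_add_rowf y
      omega
    have hzp : z < p := lt_iff_col_lt_or_rowf_lt.2 (by omega)
    have hyp := h p (Fin.covBy_iff.2 (Nat.covBy_iff_add_one_eq.2 hsucc)) ⟨z, hzp⟩
    unfold ordc at hyp
    omega

theorem lt_iff_col_lt_of_rowf_eq_zero {x z : ℕ} (hz : rowf z = 0) : x < z ↔ col x < col z := by
  rw [lt_iff_col_lt_or_rowf_lt]
  omega

theorem col_eq_col_iff_forall_rowf_eq_zero {n : ℕ} (a b : Fin n) :
    col a = col b ↔ ∀ z : Fin n, rowf z = 0 → (a < z ↔ b < z) := by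
  constructor
  · intro h z hz
    rw [Fin.lt_def, Fin.lt_def, lt_iff_col_lt_of_rowf_eq_zero hz,
      lt_iff_col_lt_of_rowf_eq_zero hz, h]
  · intro h
    have sep (x : Fin n) : col a < col x ↔ col b < col x := by
      obtain ⟨z, -, hzc, hzr⟩ := exists_le_col_eq_rowf_eq x (Nat.zero_le _) le_rfl (Nat.zero_le _)
      rw [← hzc, ← lt_iff_col_lt_of_rowf_eq_zero hzr, ← lt_iff_col_lt_of_rowf_eq_zero hzr]
      exact h z hzr
    have := sep a
    have := sep b
    omega

theorem rowf_eq_rowf_iff_of_col_le {n : ℕ} {a b : Fin n} (hab : col a ≤ col b) :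
    rowf a = rowf b ↔ ∀ z : Fin n, col z = col b → (ordc z a ↔ z < b) := by
  have hcolumn (z : Fin n) (hz : col z = col b) :
      (ordc z a ↔ z < b) ↔ (rowf z < rowf a ↔ rowf z < rowf b) := by
    rw [Fin.lt_def, lt_iff_col_lt_or_rowf_lt, ordc]
    omega
  simp +contextual only [hcolumn]
  constructor
  · intro h z _
    rw [h]
  · intro h
    have hrow : rowf a ≤ rowf b := by
      have := h b rfl
      omega
    obtain ⟨z, -, hzc, hzr⟩ :=
      exists_le_col_eq_rowf_eq b (hrow.trans (rowf_le_col b)) le_rfl hrow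
    have := h z hzc
    omega

theorem rowf_eq_rowf_iff_forall_col_eq {n : ℕ} (a b : Fin n) :
    rowf a = rowf b ↔
      (a ≤ b → ∀ z : Fin n, col z = col b → (ordc z a ↔ z < b)) ∧
      (b ≤ a → ∀ z : Fin n, col z = col a → (ordc z b ↔ z < a)) := by
  have hle {x y : Fin n} (h : x ≤ y) := rowf_eq_rowf_iff_of_col_le (gc_qseq_col.monotone_u h)
  constructor
  · exact fun h => ⟨fun hab => (hle hab).1 h, fun hba => (hle hba).1 h.symm⟩
  · rintro ⟨hab, hba⟩
    rcases le_total a b with h | h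
    · exact (hle h).2 (hab h)
    · exact ((hle h).2 (hba h)).symm

theorem qf_eq_iff {a b : ℕ} : qf a = b ↔ rowf b = 0 ∧ col a = col b := by
  constructor
  · rintro rfl
    exact ⟨rowf_qseq_add (Nat.zero_le _), (col_qseq_add (Nat.zero_le _)).symm⟩
  · rintro ⟨hrow, hcol⟩
    calc
      qf a = qf b := congrArg qseq hcol
      _ = b := by simpa only [hrow, add_zero] using qf_add_rowf b

theorem rowf_eq_col_self_iff {n : ℕ} (d : Fin n) :
    rowf d = col d ↔ ∀ e : Fin n, rowf e = rowf d → d ≤ e := by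
  constructor
  · intro hd e he
    have := rowf_le_col e
    refine not_lt.1 fun hlt => ?_
    rw [Fin.lt_def, lt_iff_col_lt_or_rowf_lt] at hlt
    omega
  · intro h
    have hrow := rowf_le_col d
    obtain ⟨e, -, hec, her⟩ := exists_le_col_eq_rowf_eq d le_rfl hrow le_rfl
    have hde : (d : ℕ) ≤ e := h e her
    have hcol : col d ≤ col e := gc_qseq_col.monotone_u hde
    omega

theorem rowf_eq_col_iff_exists {n : ℕ} (a b : Fin n) :
    rowf a = col b ↔ ∃ d : Fin n, rowf d = col d ∧ rowf a = rowf d ∧ col d = col b := by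
  constructor
  · intro h
    obtain ⟨d, -, hdc, hdr⟩ := exists_le_col_eq_rowf_eq a le_rfl (rowf_le_col a) le_rfl
    exact ⟨d, hdr.trans hdc.symm, hdr.symm, hdc.trans h⟩
  · rintro ⟨d, hdiag, hrow, hcol⟩
    exact hrow.trans (hdiag.trans hcol)

/-- A family of relations `R i` on the members `M i` of a family of `L`-structures is uniformly
definable if a single parameter-free formula, the same for all `i`, defines each of them. The
relations have their arguments indexed by `α`, the type of free variables of the formula. -/
def UniformlyDefinable (L : FirstOrder.Language) {ι α : Type*} {M : ι → Type*}
    [∀ i, L.Structure (M i)] (R : ∀ i, (α → M i) → Prop) : Prop :=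
  ∃ φ : L.Formula α, ∀ i v, φ.Realize v ↔ R i v

namespace UniformlyDefinable

variable {L : FirstOrder.Language} {ι α : Type*} {M : ι → Type*} [∀ i, L.Structure (M i)]
  {R S : ∀ i, (α → M i) → Prop}

theorem congr (hS : UniformlyDefinable L S) (h : ∀ i v, R i v ↔ S i v) :
    UniformlyDefinable L R :=
  hS.imp fun _ hφ i v => (hφ i v).trans (h i v).symm

theorem rel₂ (r : L.Relations 2) (x y : α) :
    UniformlyDefinable L fun i (v : α → M i) => Structure.RelMap r ![v x, v y] :=
  ⟨r.formula₂ (.var x) (.var y), fun _ _ => Formula.realize_rel₂⟩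

theorem not (hR : UniformlyDefinable L R) : UniformlyDefinable L fun i v => ¬R i v :=
  let ⟨φ, hφ⟩ := hR
  ⟨φ.not, fun i v => Formula.realize_not.trans (hφ i v).not⟩

theorem and (hR : UniformlyDefinable L R) (hS : UniformlyDefinable L S) :
    UniformlyDefinable L fun i v => R i v ∧ S i v :=
  let ⟨φ, hφ⟩ := hR
  let ⟨ψ, hψ⟩ := hS
  ⟨φ ⊓ ψ, fun i v => Formula.realize_inf.trans (and_congr (hφ i v) (hψ i v))⟩

theorem imp (hR : UniformlyDefinable L R) (hS : UniformlyDefinable L S) :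
    UniformlyDefinable L fun i v => R i v → S i v :=
  let ⟨φ, hφ⟩ := hR
  let ⟨ψ, hψ⟩ := hS
  ⟨φ.imp ψ, fun i v => Formula.realize_imp.trans (imp_congr (hφ i v) (hψ i v))⟩

theorem iff (hR : UniformlyDefinable L R) (hS : UniformlyDefinable L S) :
    UniformlyDefinable L fun i v => (R i v ↔ S i v) :=
  ((hR.imp hS).and (hS.imp hR)).congr fun _ _ => iff_iff_implies_and_implies

theorem all {T : ∀ i, (α → M i) → M i → Prop}
    (hT : UniformlyDefinable L fun i (w : α ⊕ Unit → M i) =>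
      T i (fun x => w (.inl x)) (w (.inr ()))) :
    UniformlyDefinable L fun i v => ∀ z, T i v z :=
  let ⟨φ, hφ⟩ := hT
  ⟨φ.iAlls Unit, fun i v => Formula.realize_iAlls.trans <|
    (Equiv.funUnique Unit (M i)).forall_congr fun u => hφ i (Sum.elim v u)⟩

theorem ex {T : ∀ i, (α → M i) → M i → Prop}
    (hT : UniformlyDefinable L fun i (w : α ⊕ Unit → M i) =>
      T i (fun x => w (.inl x)) (w (.inr ()))) :
    UniformlyDefinable L fun i v => ∃ z, T i v z :=
  let ⟨φ, hφ⟩ := hT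
  ⟨φ.iExs Unit, fun i v => Formula.realize_iExs.trans <|
    (Equiv.funUnique Unit (M i)).exists_congr fun u => hφ i (Sum.elim v u)⟩

end UniformlyDefinable

section Prefix

open Sum (inl inr)

local instance (n : ℕ) : Lord2.Structure (Fin (n + 1)) := struct2 n

/-- Uniform definability over the family of all finite prefix structures `({0,...,n}, <, ◁)`. -/
abbrev PrefixDefinable {α : Type*} (R : ∀ n : ℕ, (α → Fin (n + 1)) → Prop) : Prop :=
  UniformlyDefinable Lord2 R

variable {α : Type*} (x y : α)

theorem prefixDefinable_lt : PrefixDefinable fun _ v => v x < v y :=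
  (UniformlyDefinable.rel₂ Rel2.lt x y).congr fun _ _ => Iff.rfl

theorem prefixDefinable_ordc : PrefixDefinable fun _ v => ordc (v x) (v y) :=
  (UniformlyDefinable.rel₂ Rel2.ordc x y).congr fun _ _ => Iff.rfl

theorem prefixDefinable_le : PrefixDefinable fun _ v => v x ≤ v y :=
  (prefixDefinable_lt y x).not.congr fun _ _ => not_lt.symm

theorem prefixDefinable_covBy : PrefixDefinable fun _ v => v x ⋖ v y :=
  (prefixDefinable_lt x y).and <| .all <|
    (prefixDefinable_lt (inl x) (inr ())).imp (prefixDefinable_lt (inr ()) (inl y)).not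

theorem prefixDefinable_rowf_eq_zero : PrefixDefinable fun _ v => rowf (v x) = 0 := by
  refine .congr ?_ fun _ v => rowf_eq_zero_iff_forall_covBy (v x)
  exact .all <| (prefixDefinable_covBy (inr ()) (inl x)).imp <|
    .imp (.ex <| prefixDefinable_lt (inr ()) (inl (inr ()))) (prefixDefinable_ordc (inl x) (inr ()))

theorem prefixDefinable_col_eq_col : PrefixDefinable fun _ v => col (v x) = col (v y) := by
  refine .congr ?_ fun _ v => col_eq_col_iff_forall_rowf_eq_zero (v x) (v y)
  exact .all <| (prefixDefinable_rowf_eq_zero (inr ())).imp <|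
    (prefixDefinable_lt (inl x) (inr ())).iff (prefixDefinable_lt (inl y) (inr ()))

theorem prefixDefinable_rowf_eq_rowf : PrefixDefinable fun _ v => rowf (v x) = rowf (v y) := by
  refine .congr ?_ fun _ v => rowf_eq_rowf_iff_forall_col_eq (v x) (v y)
  have horiented (x y : α) : PrefixDefinable fun n v =>
      v x ≤ v y → ∀ z : Fin (n + 1), col z = col (v y) → (ordc z (v x) ↔ z < v y) :=
    (prefixDefinable_le x y).imp <| .all <| (prefixDefinable_col_eq_col (inr ()) (inl y)).imp <|
      (prefixDefinable_ordc (inr ()) (inl x)).iff (prefixDefinable_lt (inr ()) (inl y))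
  exact (horiented x y).and (horiented y x)

theorem prefixDefinable_qf_eq : PrefixDefinable fun _ v => qf (v x) = v y :=
  ((prefixDefinable_rowf_eq_zero y).and (prefixDefinable_col_eq_col x y)).congr fun _ _ => qf_eq_iff

theorem prefixDefinable_rowf_eq_col_self : PrefixDefinable fun _ v => rowf (v x) = col (v x) := by
  refine .congr ?_ fun _ v => rowf_eq_col_self_iff (v x)
  exact .all <|
    (prefixDefinable_rowf_eq_rowf (inr ()) (inl x)).imp (prefixDefinable_le (inl x) (inr ()))

theorem prefixDefinable_rowf_eq_col : PrefixDefinable fun _ v => rowf (v x) = col (v y) := by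
  refine .congr ?_ fun _ v => rowf_eq_col_iff_exists (v x) (v y)
  exact .ex <| (prefixDefinable_rowf_eq_col_self (inr ())).and <|
    (prefixDefinable_rowf_eq_rowf (inl x) (inr ())).and <|
      (prefixDefinable_col_eq_col (inr ()) (inl y))

end Prefix

/-- Lemma 3.3: there are FO(<,◁)-formulas expressing
`c(x)=c(y)`, `r(x)=r(y)`, `q(x)=y` and `r(x)=c(y)` in every finite prefix. -/
theorem lt_ordc_define_samecol_samerow_q_rc :
    ∃ (φsamecol φsamerow φq φrc : Lord2.Formula (Fin 2)),
      ∀ n : ℕ,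
        letI := struct2 n
        ∀ a b : Fin (n + 1),
          (φsamecol.Realize ![a, b] ↔ col (a : ℕ) = col (b : ℕ)) ∧
          (φsamerow.Realize ![a, b] ↔ rowf (a : ℕ) = rowf (b : ℕ)) ∧
          (φq.Realize ![a, b] ↔ qf (a : ℕ) = (b : ℕ)) ∧
          (φrc.Realize ![a, b] ↔ rowf (a : ℕ) = col (b : ℕ)) := by
  obtain ⟨φsamecol, hsamecol⟩ := prefixDefinable_col_eq_col (0 : Fin 2) 1
  obtain ⟨φsamerow, hsamerow⟩ := prefixDefinable_rowf_eq_rowf (0 : Fin 2) 1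
  obtain ⟨φq, hq⟩ := prefixDefinable_qf_eq (0 : Fin 2) 1
  obtain ⟨φrc, hrc⟩ := prefixDefinable_rowf_eq_col (0 : Fin 2) 1
  exact ⟨φsamecol, φsamerow, φq, φrc, fun n a b =>
    ⟨hsamecol n ![a, b], hsamerow n ![a, b], hq n ![a, b], hrc n ![a, b]⟩⟩
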